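/- arXiv:2207.00105 — 3 statements merged into one kernel-verified Lean document; each statement's English description precedes it below -/
import Mathlib

section
/- Let F be a field with |F| > 2 and let m ≥ 3 be an integer. Then there exists a tiling (U, V) of F^{2m} such that U is projective, both U and V are full-rank (their affine spans equal F^{2m}), and both U and V are aperiodic (per(U) = per(V) = {0}). Moreover, if F is finite, U and V can be chosen with |U| = |V| = |F|^m. -/
/-- `(U, V)` is a tiling of the ambient space `S`: every element of `S` is uniquely
represented as the sum of an element of `U` and an element of `V`. -/
def IsTiling {S : Type*} [AddCommGroup S] (U V : Set S) : Prop :=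
  ∀ s : S, ∃! p : S × S, p.1 ∈ U ∧ p.2 ∈ V ∧ p.1 + p.2 = s

/-- `U` is projective: `F·U = U`, i.e. `U` is closed under scalar multiplication. -/
def IsProjective (F : Type*) {S : Type*} [Field F] [AddCommGroup S] [Module F S]
    (U : Set S) : Prop :=
  ∀ (a : F) ⦃u : S⦄, u ∈ U → a • u ∈ U

/-- The set of periods of `X`: vectors `w` with `X + w = X`. -/
def periods {S : Type*} [AddCommGroup S] (X : Set S) : Set S :=
  {w | (fun v => v + w) '' X = X}

open Classical in
/-- The homogeneous function whose graph is `U`. -/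
noncomputable def ff {F : Type*} [Field F] {n : ℕ} (x : Fin (n + 3) → F) : Fin (n + 3) → F :=
  fun i => if ∀ j, j ≠ i → j ≠ i + 1 → x j = 0 then x (i + 1) else 0

open Classical in
/-- The function whose graph is `V`. -/
noncomputable def gg {F : Type*} [Field F] {n : ℕ} (y : Fin (n + 3) → F) : Fin (n + 3) → F :=
  fun i => if y i = 0 then 1 else 0

lemma fin_aux1 {n : ℕ} (i : Fin (n + 3)) : i + 1 ≠ i := by
  simp

lemma fin_aux2 {n : ℕ} (i : Fin (n + 3)) : i + 1 + 1 ≠ i := by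
  rw [add_assoc]
  intro h
  have h2 : (1 + 1 : Fin (n + 3)) = 0 := by simpa using h
  have := congrArg Fin.val h2
  simp [Fin.val_add] at this
  rw [Nat.mod_eq_of_lt (by omega)] at this
  omega

section
variable {F : Type*} [Field F] {n : ℕ}

lemma ff_supp {x : Fin (n + 3) → F} {i : Fin (n + 3)} (h : ff x i ≠ 0) :
    (∀ j, j ≠ i → j ≠ i + 1 → x j = 0) ∧ x (i + 1) ≠ 0 ∧ ff x i = x (i + 1) := by
  unfold ff at *
  split_ifs at h ⊢ with h1
  · exact ⟨h1, h, rfl⟩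
  · exact absurd rfl h

lemma ff_other {x : Fin (n + 3) → F} {i k : Fin (n + 3)}
    (h1 : ∀ j, j ≠ i → j ≠ i + 1 → x j = 0) (h2 : x (i + 1) ≠ 0) (hk : k ≠ i) : ff x k = 0 := by
  by_contra h
  obtain ⟨a, b, -⟩ := ff_supp h
  have hk1 : k = i + 1 := by
    by_contra hne
    exact h2 (a (i + 1) (fun e => hne e.symm) (fun e => hk (by simpa using e.symm)))
  subst hk1
  exact b (h1 _ (fin_aux2 i) (fin_aux1 _))

lemma ff_eq {x : Fin (n + 3) → F} {i : Fin (n + 3)}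
    (h1 : ∀ j, j ≠ i → j ≠ i + 1 → x j = 0) : ff x i = x (i + 1) := by
  unfold ff; rw [if_pos h1]

lemma ff_add (x d : Fin (n + 3) → F) (h : ∀ j, ff x j = 0 → d j = 0) : ff (x + d) = ff x := by
  by_cases h0 : ∃ i, ff x i ≠ 0
  · obtain ⟨i, hi⟩ := h0
    obtain ⟨a, b, c⟩ := ff_supp hi
    have hd : ∀ k, k ≠ i → d k = 0 := fun k hk => h k (ff_other a b hk)
    have a' : ∀ j, j ≠ i → j ≠ i + 1 → (x + d) j = 0 := by
      intro j h1 h2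
      simp [a j h1 h2, hd j h1]
    have b' : (x + d) (i + 1) = x (i + 1) := by simp [hd _ (fin_aux1 i)]
    funext k
    by_cases hk : k = i
    · subst hk
      rw [ff_eq a', b', c]
    · rw [ff_other a b hk, ff_other a' (by rw [b']; exact b) hk]
  · push Not at h0
    have : d = 0 := funext fun j => h j (h0 j)
    simp [this]

lemma ff_smul (a : F) (x : Fin (n + 3) → F) : ff (a • x) = a • ff x := by
  by_cases ha : a = 0
  · subst ha; funext i; simp [ff]
  · funext i
    have : (∀ j, j ≠ i → j ≠ i + 1 → (a • x) j = 0) ↔ (∀ j, j ≠ i → j ≠ i + 1 → x j = 0) := by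
      simp [Pi.smul_apply, ha]
    by_cases h : ∀ j, j ≠ i → j ≠ i + 1 → x j = 0
    · rw [ff_eq (this.2 h), Pi.smul_apply, Pi.smul_apply, ff_eq h]
    · unfold ff
      rw [if_neg (fun h' => h (this.1 h')), Pi.smul_apply, if_neg h, smul_zero]

lemma ff_zero : ff (0 : Fin (n + 3) → F) = 0 := by
  funext i; simp [ff]

lemma gg_add (y d : Fin (n + 3) → F) (j) (h : d j = 0) : gg (y + d) j = gg y j := by
  have : (y + d) j = y j := by rw [Pi.add_apply, h, add_zero]
  unfold gg
  rw [this]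

lemma key (s t : Fin (n + 3) → F) (x : Fin (n + 3) → F) :
    x + gg (t - ff x) = s ↔ x = s - gg (t - ff (s - gg t)) := by
  have A : ∀ x : Fin (n + 3) → F, x + gg (t - ff x) = s → ff (s - gg t) = ff x := by
    intro x h
    have : s - gg t = x + (gg (t - ff x) - gg t) := by rw [← h]; abel
    rw [this]
    apply ff_add
    intro j hj
    have := gg_add t (-ff x) j (by simp [hj])
    rw [← sub_eq_add_neg] at this
    simp [this]
  constructor
  · intro h
    rw [A x h]
    exact eq_sub_of_add_eq h
  · intro h
    have : ff x = ff (s - gg t) := by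
      have e : x = (s - gg t) + (gg t - gg (t - ff (s - gg t))) := by rw [h]; abel
      rw [e]
      apply ff_add
      intro j hj
      have := gg_add t (-ff (s - gg t)) j (by simp [hj])
      rw [← sub_eq_add_neg] at this
      simp [this]
    rw [this]
    exact add_eq_of_eq_sub h

lemma ff_period (hF : ∃ a : F, a ≠ 0 ∧ a ≠ 1) (w v : Fin (n + 3) → F)
    (h : ∀ x, ff (x + w) = ff x + v) : w = 0 ∧ v = 0 := by
  have hw : w = 0 := by
    have B : ∀ j k : Fin (n + 3), k ≠ j → k ≠ j + 1 → w k = 0 := by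
      intro j k h1 h2
      have C : ∀ c : F, c + v j ≠ 0 → w k = 0 := by
        intro c hc
        have hx := congrFun (h (Pi.single (j + 1) c)) j
        have e1 : ff (Pi.single (j + 1) c : Fin (n + 3) → F) j = c := by
          rw [ff_eq]
          · simp
          · intro i _ hi; simp [hi]
        rw [Pi.add_apply, e1] at hx
        obtain ⟨a, -, -⟩ := ff_supp (x := Pi.single (j + 1) c + w) (i := j) (by rw [hx]; exact hc)
        simpa [h2] using a k h1 h2
      obtain ⟨a, ha0, ha1⟩ := hF
      by_cases hv : a + v j = 0
      · apply C 1
        intro h1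
        exact ha1 (add_right_cancel (hv.trans h1.symm))
      · exact C a hv
    funext k
    exact B (k + 1) k (fin_aux1 k).symm (fin_aux2 k).symm
  refine ⟨hw, ?_⟩
  have := h 0
  subst hw
  simpa [ff_zero] using this.symm

lemma gg_period (hF : ∃ a : F, a ≠ 0 ∧ a ≠ 1) (w v : Fin (n + 3) → F)
    (h : ∀ y, gg (y + w) = gg y + v) : w = 0 ∧ v = 0 := by
  have hw : w = 0 := by
    funext i
    by_contra hi
    simp only [Pi.zero_apply] at hi
    obtain ⟨a, ha0, ha1⟩ := hF
    have e0 := congrFun (h 0) i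
    have e1 := congrFun (h (-w)) i
    have e2 := congrFun (h (a • w)) i
    simp only [gg, Pi.add_apply, Pi.zero_apply, Pi.neg_apply, Pi.smul_apply, smul_eq_mul,
      zero_add, neg_add_cancel, if_true, neg_eq_zero, mul_eq_zero, ha0, hi, or_self,
      if_false] at e0 e1 e2
    split_ifs at e2 with h3
    · have : (a + 1) * w i = 0 := by linear_combination h3
      have h4 : a + 1 = 0 := by simpa [hi] using this
      apply ha1
      linear_combination h4 + e0 - e1
    · apply one_ne_zero (α := F)
      linear_combination e1 - e2
  refine ⟨hw, ?_⟩
  have := h 0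
  subst hw
  simpa using this

/-- A submodule of the product containing both coordinate families is everything. -/
lemma top_of {S : Type*} [AddCommGroup S] [Module F S]
    (e : ((Fin (n + 3) → F) × (Fin (n + 3) → F)) ≃ₗ[F] S) (D : Submodule F S)
    (h1 : ∀ i, e (Pi.single i 1, 0) ∈ D) (h2 : ∀ i, e (0, Pi.single i 1) ∈ D) : D = ⊤ := by
  rw [eq_top_iff]
  rintro s -
  obtain ⟨⟨x, y⟩, rfl⟩ := e.surjective s
  have : ((x, y) : (Fin (n + 3) → F) × (Fin (n + 3) → F)) =
      ∑ i, x i • (Pi.single i 1, 0) + ∑ i, y i • (0, Pi.single i 1) := by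
    ext j
    · simp [Prod.fst_sum, Finset.sum_apply, Pi.single_apply]
    · simp [Prod.snd_sum, Finset.sum_apply, Pi.single_apply]
  rw [this, map_add, map_sum, map_sum]
  refine D.add_mem (D.sum_mem fun i _ => ?_) (D.sum_mem fun i _ => ?_)
  · rw [map_smul]; exact D.smul_mem _ (h1 i)
  · rw [map_smul]; exact D.smul_mem _ (h2 i)

lemma span_top {S : Type*} [AddCommGroup S] [Module F S] (U : Set S) (hU : U.Nonempty)
    (h : vectorSpan F U = ⊤) : affineSpan F U = ⊤ :=
  (AffineSubspace.affineSpan_eq_top_iff_vectorSpan_eq_top_of_nonempty F S S hU).2 h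

end

theorem statement4 {F : Type*} [Field F] (hF : ∃ a : F, a ≠ 0 ∧ a ≠ 1)
    (m : ℕ) (hm : 3 ≤ m) :
    ∃ U V : Set (Fin (2 * m) → F),
      IsTiling U V ∧
      IsProjective F U ∧
      affineSpan F U = ⊤ ∧ affineSpan F V = ⊤ ∧
      periods U = {0} ∧ periods V = {0} ∧
      (∀ _ : Finite F, U.ncard = Nat.card F ^ m ∧ V.ncard = Nat.card F ^ m) := by
  obtain ⟨n, rfl⟩ : ∃ n, m = n + 3 := ⟨m - 3, by omega⟩
  have e : ((Fin (n + 3) → F) × (Fin (n + 3) → F)) ≃ₗ[F] (Fin (2 * (n + 3)) → F) :=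
    LinearEquiv.ofFinrankEq _ _ (by simp; ring)
  refine ⟨Set.range fun x => e (x, ff x), Set.range fun y => e (gg y, y), ?_, ?_, ?_, ?_, ?_, ?_, ?_⟩
  · intro s
    obtain ⟨⟨s, t⟩, rfl⟩ := e.surjective s
    have hk := (key s t _).2 rfl
    set x := s - gg (t - ff (s - gg t)) with hx
    refine ⟨(e (x, ff x), e (gg (t - ff x), t - ff x)), ⟨⟨x, rfl⟩, ⟨t - ff x, rfl⟩, ?_⟩, ?_⟩
    · simp only [← map_add]
      rw [Prod.mk_add_mk, hk]; simp
    · rintro ⟨_, _⟩ ⟨⟨x', rfl⟩, ⟨y', rfl⟩, h⟩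
      simp only [← map_add] at h
      have h := e.injective h
      rw [Prod.mk_add_mk, Prod.mk.injEq] at h
      obtain ⟨h1, h2⟩ := h
      have hy : y' = t - ff x' := by rw [← h2]; abel
      subst hy
      have : x' = x := (key s t x').1 h1
      rw [this]
  · rintro a _ ⟨x, rfl⟩
    exact ⟨a • x, by simp [ff_smul, ← map_smul]⟩
  · apply span_top _ (Set.range_nonempty _)
    have m1 : ∀ x y : Fin (n + 3) → F, e (x - y, ff x - ff y) ∈
        vectorSpan F (Set.range fun x => e (x, ff x)) := by
      intro x y
      have := vsub_mem_vectorSpan F (s := Set.range fun x => e (x, ff x)) ⟨x, rfl⟩ ⟨y, rfl⟩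
      simpa only [vsub_eq_sub, ← map_sub, Prod.mk_sub_mk] using this
    have f1 : ∀ (i : Fin (n + 3)) (c : F), ff (Pi.single i c + Pi.single (i + 1) 1) =
        (Pi.single i 1 : Fin (n + 3) → F) := by
      intro i c
      have h1 : ∀ j, j ≠ i → j ≠ i + 1 →
          (Pi.single i c + Pi.single (i + 1) 1 : Fin (n + 3) → F) j = 0 := by
        intro j a b; simp [a, b]
      have h2 : (Pi.single i c + Pi.single (i + 1) 1 : Fin (n + 3) → F) (i + 1) = 1 := by
        simp
      funext k
      by_cases hk : k = i
      · subst hk; rw [ff_eq h1, h2]; simp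
      · rw [ff_other h1 (by rw [h2]; exact one_ne_zero) hk]; simp [hk]
    have m2 : ∀ i, e (Pi.single i 1, 0) ∈ vectorSpan F (Set.range fun x => e (x, ff x)) := by
      intro i
      have := m1 (Pi.single i 1 + Pi.single (i + 1) 1) (Pi.single i 0 + Pi.single (i + 1) 1)
      rw [f1, f1] at this
      simpa using this
    refine top_of e _ m2 fun i => ?_
    have h3 := m1 (Pi.single i 0 + Pi.single (i + 1) 1) 0
    rw [f1, ff_zero] at h3
    have := Submodule.sub_mem _ h3 (m2 (i + 1))
    rw [← map_sub] at this
    simpa using this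
  · apply span_top _ (Set.range_nonempty _)
    have m1 : ∀ x y : Fin (n + 3) → F, e (gg x - gg y, x - y) ∈
        vectorSpan F (Set.range fun x => e (gg x, x)) := by
      intro x y
      have := vsub_mem_vectorSpan F (s := Set.range fun x => e (gg x, x)) ⟨x, rfl⟩ ⟨y, rfl⟩
      simpa only [vsub_eq_sub, ← map_sub, Prod.mk_sub_mk] using this
    have g1 : ∀ (i : Fin (n + 3)) (c : F), c ≠ 0 → gg (0 : Fin (n + 3) → F) - gg (Pi.single i c) =
        Pi.single i 1 := by
      intro i c hc
      funext k
      by_cases hk : k = i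
      · subst hk; simp [gg, hc]
      · simp [gg, hk]
    have m2 : ∀ i, e (0, Pi.single i 1) ∈ vectorSpan F (Set.range fun x => e (gg x, x)) := by
      intro i
      obtain ⟨a, ha0, ha1⟩ := hF
      have := Submodule.smul_mem _ (1 - a)⁻¹ (m1 (Pi.single i 1) (Pi.single i a))
      have h2 : gg (Pi.single i 1 : Fin (n + 3) → F) - gg (Pi.single i a) = 0 := by
        have := (g1 i a ha0).trans (g1 i 1 one_ne_zero).symm
        rw [sub_right_inj] at this
        rw [this, sub_self]
      have h3 : (1 - a) ≠ 0 := fun h => ha1 (sub_eq_zero.1 h).symm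
      rw [h2, ← map_smul, ← Pi.single_sub, Prod.smul_mk, smul_zero, ← Pi.single_smul, smul_eq_mul,
        inv_mul_cancel₀ h3] at this
      exact this
    refine top_of e _ (fun i => ?_) m2
    have h3 := m1 0 (Pi.single i 1)
    rw [g1 i 1 one_ne_zero] at h3
    have := Submodule.add_mem _ h3 (m2 i)
    rw [← map_add] at this
    simpa using this
  · apply Set.eq_singleton_iff_unique_mem.2
    refine ⟨by simp [periods], ?_⟩
    intro w hw
    obtain ⟨⟨w, v⟩, rfl⟩ := e.surjective w
    have : ∀ x, ff (x + w) = ff x + v := by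
      intro x
      have h : e (x, ff x) + e (w, v) ∈ Set.range fun x => e (x, ff x) := by
        rw [← show _ = _ from hw]
        exact ⟨_, ⟨x, rfl⟩, rfl⟩
      obtain ⟨z, hz⟩ := h
      simp only [← map_add] at hz
      have hz := e.injective hz
      rw [Prod.mk_add_mk, Prod.mk.injEq] at hz
      rw [← hz.1, hz.2]
    obtain ⟨rfl, rfl⟩ := ff_period hF w v this
    exact map_zero e
  · apply Set.eq_singleton_iff_unique_mem.2
    refine ⟨by simp [periods], ?_⟩
    intro w hw
    obtain ⟨⟨v, w⟩, rfl⟩ := e.surjective w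
    have : ∀ x, gg (x + w) = gg x + v := by
      intro x
      have h : e (gg x, x) + e (v, w) ∈ Set.range fun x => e (gg x, x) := by
        rw [← show _ = _ from hw]
        exact ⟨_, ⟨x, rfl⟩, rfl⟩
      obtain ⟨z, hz⟩ := h
      simp only [← map_add] at hz
      have hz := e.injective hz
      rw [Prod.mk_add_mk, Prod.mk.injEq] at hz
      rw [← hz.2, hz.1]
    obtain ⟨rfl, rfl⟩ := gg_period hF w v this
    exact map_zero e
  · intro _
    have C : ∀ k : (Fin (n + 3) → F) → (Fin (2 * (n + 3)) → F), Function.Injective k →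
        (Set.range k).ncard = Nat.card F ^ (n + 3) := by
      intro k hk
      rw [← Set.image_univ, Set.ncard_image_of_injective _ hk, Set.ncard_univ, Nat.card_fun]
      simp
    constructor
    · exact C _ fun x y h => (Prod.mk.inj (e.injective h)).1
    · exact C _ fun x y h => (Prod.mk.inj (e.injective h)).2
end

section
/- Let F be a field with |F| > 2 and let m ≥ 5 be an integer. Then there exists a tiling (U, V) of F^{2m} such that both U and V are projective, both U and V are full-rank (their affine spans equal F^{2m}), and both U and V are aperiodic (per(U) = per(V) = {0}). Moreover, if F is finite, U and V can be chosen with |U| = |V| = |F|^m. -/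
namespace TilingAux

open Classical in
/-- The nonlinear homogeneous map defining `U` as a graph. -/
noncomputable def hmap {F I : Type*} [Field F] [CommRing I] (x : I → F) : I → F :=
  fun i => if (∀ k, k ≠ i - 1 → k ≠ i → k ≠ i + 1 → x k = 0) then x (i + 1) else 0

open Classical in
/-- The nonlinear homogeneous map defining `V` as a graph. -/
noncomputable def fmap {F I : Type*} [Field F] [CommRing I] (y : I → F) : I → F :=
  fun j => if y j ≠ 0 then y (j + 1) else 0

section
variable {F I : Type*} [Field F] [CommRing I]

lemma hmap_ne {x : I → F} {i : I} (h : hmap x i ≠ 0) :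
    (∀ k, k ≠ i - 1 → k ≠ i → k ≠ i + 1 → x k = 0) ∧ x (i + 1) ≠ 0 ∧ hmap x i = x (i + 1) := by
  unfold hmap at h ⊢
  split_ifs at h ⊢ with h1
  · exact ⟨h1, h, rfl⟩
  · exact absurd rfl h

lemma hmap_unique (h2 : (2 : I) ≠ 0) (h3 : (3 : I) ≠ 0) (h4 : (4 : I) ≠ 0)
    {x : I → F} {i k : I} (hi : hmap x i ≠ 0) (hk : hmap x k ≠ 0) : i = k := by
  obtain ⟨a1, a2, -⟩ := hmap_ne hi
  obtain ⟨b1, b2, -⟩ := hmap_ne hk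
  by_contra hne
  have A : k + 1 = i - 1 ∨ k + 1 = i := by
    by_contra! hc
    exact b2 (a1 _ hc.1 hc.2 (fun h => hne (by linear_combination -h)))
  have B : i + 1 = k - 1 ∨ i + 1 = k := by
    by_contra! hc
    exact a2 (b1 _ hc.1 hc.2 (fun h => hne (by linear_combination h)))
  rcases A with A | A <;> rcases B with B | B
  · exact h4 (by linear_combination A + B)
  · exact h3 (by linear_combination A + B)
  · exact h3 (by linear_combination A + B)
  · exact h2 (by linear_combination A + B)

lemma hmap_add (h1 : (1 : I) ≠ 0) (h2 : (2 : I) ≠ 0) (h3 : (3 : I) ≠ 0) (h4 : (4 : I) ≠ 0)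
    {x l : I → F} {i : I} (hi : hmap x i ≠ 0)
    (hl : ∀ j, j ≠ i - 1 → j ≠ i → l j = 0) : hmap (x + l) = hmap x := by
  obtain ⟨a1, a2, a3⟩ := hmap_ne hi
  have e : hmap (x + l) i = hmap x i := by
    rw [a3]
    unfold hmap
    have hz : l (i + 1) = 0 := hl _ (fun h => h2 (by linear_combination h))
      (fun h => h1 (by linear_combination h))
    rw [if_pos]
    · simp [hz]
    · intro k k1 k2 k3
      simp [a1 k k1 k2 k3, hl k k1 k2]
  funext k
  by_cases hk : k = i
  · rw [hk, e]
  · have z1 : hmap x k = 0 := by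
      by_contra hc
      exact hk (hmap_unique h2 h3 h4 hc hi)
    have z2 : hmap (x + l) k = 0 := by
      by_contra hc
      exact hk (hmap_unique h2 h3 h4 hc (by rw [e]; exact hi))
    rw [z1, z2]

lemma fmap_diff {q q' : I → F} {i : I} (h : ∀ j, j ≠ i → q' j = q j) (j : I)
    (j1 : j ≠ i - 1) (j2 : j ≠ i) : fmap q' j = fmap q j := by
  unfold fmap
  rw [h j j2, h (j + 1) (fun e => j1 (by linear_combination e))]

lemma key (h1 : (1 : I) ≠ 0) (h2 : (2 : I) ≠ 0) (h3 : (3 : I) ≠ 0) (h4 : (4 : I) ≠ 0)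
    (x q : I → F) (c : F) :
    hmap (x + c • (fmap (q - hmap x) - fmap q)) = hmap x := by
  by_cases hx : hmap x = 0
  · simp [hx]
  · obtain ⟨i, hi⟩ := Function.ne_iff.mp hx
    apply hmap_add h1 h2 h3 h4 hi
    intro j j1 j2
    have : fmap (q - hmap x) j = fmap q j := by
      apply fmap_diff (i := i) _ j j1 j2
      intro k hk
      have : hmap x k = 0 := by
        by_contra hc
        exact hk (hmap_unique h2 h3 h4 hc hi)
      simp [this]
    simp [this]

lemma hmap_smul (a : F) (x : I → F) : hmap (a • x) = a • hmap x := by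
  by_cases ha : a = 0
  · subst ha
    funext i
    simp [hmap]
  · funext i
    simp only [hmap, Pi.smul_apply, smul_eq_mul]
    split_ifs <;> simp_all

lemma fmap_smul (a : F) (x : I → F) : fmap (a • x) = a • fmap x := by
  by_cases ha : a = 0
  · subst ha
    funext i
    simp [fmap]
  · funext i
    simp only [fmap, Pi.smul_apply, smul_eq_mul]
    split_ifs <;> simp_all

/-- Graph of `hmap`. -/
def Uset (F I : Type*) [Field F] [CommRing I] : Set ((I → F) × (I → F)) :=
  Set.range fun x => (x, hmap x)

/-- Graph of `fmap`. -/
def Vset (F I : Type*) [Field F] [CommRing I] : Set ((I → F) × (I → F)) :=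
  Set.range fun y => (fmap y, y)

lemma tiling (h1 : (1 : I) ≠ 0) (h2 : (2 : I) ≠ 0) (h3 : (3 : I) ≠ 0) (h4 : (4 : I) ≠ 0) :
    IsTiling (Uset F I) (Vset F I) := by
  rintro ⟨p, q⟩
  set p' := p - fmap q with hp'
  set x := p' + (-1 : F) • (fmap (q - hmap p') - fmap q) with hx
  have hh : hmap x = hmap p' := key h1 h2 h3 h4 p' q (-1)
  refine ⟨((x, hmap x), (fmap (q - hmap p'), q - hmap p')), ⟨⟨x, rfl⟩, ⟨_, rfl⟩, ?_⟩, ?_⟩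
  · rw [hh]
    ext1
    · simp only [Prod.mk_add_mk, hx, hp', neg_smul, one_smul]
      abel
    · simp
  · rintro ⟨u, v⟩ ⟨⟨z, rfl⟩, ⟨y, rfl⟩, hs⟩
    simp only [Prod.mk_add_mk, Prod.mk.injEq] at hs
    obtain ⟨s1, s2⟩ := hs
    have hy : y = q - hmap z := by rw [← s2]; abel
    have hz := key h1 h2 h3 h4 z q 1
    have e : z + (1 : F) • (fmap (q - hmap z) - fmap q) = p' := by
      rw [hp', ← s1, hy, one_smul]; abel
    rw [e] at hz
    have hzx : z = x := by
      rw [hx, hz, ← e, one_smul, neg_smul, one_smul]; abel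
    have hyy : y = q - hmap p' := by rw [hz]; exact hy
    rw [hyy, hzx]

lemma projU : IsProjective F (Uset F I) := by
  rintro a _ ⟨x, rfl⟩
  exact ⟨a • x, by simp [hmap_smul]⟩

lemma projV : IsProjective F (Vset F I) := by
  rintro a _ ⟨x, rfl⟩
  exact ⟨a • x, by simp [fmap_smul]⟩

lemma affineSpan_top_of_span {S : Type*} [AddCommGroup S] [Module F S] {U : Set S}
    (h0 : (0 : S) ∈ U) (h : Submodule.span F U = ⊤) : affineSpan F U = ⊤ := by
  rw [AffineSubspace.affineSpan_eq_top_iff_vectorSpan_eq_top_of_nonempty F S S ⟨0, h0⟩,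
    vectorSpan_eq_span_vsub_set_right F h0]
  simpa using h

lemma top_of_singles [Fintype I] [DecidableEq I] (P : Submodule F ((I → F) × (I → F)))
    (hA : ∀ j, ((Pi.single j 1 : I → F), (0 : I → F)) ∈ P)
    (hB : ∀ j, ((0 : I → F), (Pi.single j 1 : I → F)) ∈ P) : P = ⊤ := by
  rw [eq_top_iff]
  rintro ⟨x, y⟩ -
  have e : (x, y) = ∑ j, x j • ((Pi.single j 1 : I → F), (0 : I → F)) +
      ∑ j, y j • ((0 : I → F), (Pi.single j 1 : I → F)) := by
    ext i
    · simp [Prod.fst_sum, Finset.sum_apply, Pi.single_apply]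
    · simp [Prod.snd_sum, Finset.sum_apply, Pi.single_apply]
  rw [e]
  exact P.add_mem (P.sum_mem fun j _ => P.smul_mem _ (hA j))
    (P.sum_mem fun j _ => P.smul_mem _ (hB j))

lemma hmap_big (h1 : (1 : I) ≠ 0) (h2 : (2 : I) ≠ 0) (h3 : (3 : I) ≠ 0) (h4 : (4 : I) ≠ 0)
    {x : I → F} (j : I) (hx : ∀ k, k ≠ j → x k ≠ 0) : hmap x = 0 := by
  funext i
  by_contra hc
  obtain ⟨a, -, -⟩ := hmap_ne hc
  by_cases hj : i + 2 = j
  · refine hx (i + 3) (fun h => h1 (by linear_combination h - hj)) (a _ ?_ ?_ ?_)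
    · exact fun h => h4 (by linear_combination h)
    · exact fun h => h3 (by linear_combination h)
    · exact fun h => h2 (by linear_combination h)
  · refine hx (i + 2) hj (a _ ?_ ?_ ?_)
    · exact fun h => h3 (by linear_combination h)
    · exact fun h => h2 (by linear_combination h)
    · exact fun h => h1 (by linear_combination h)

lemma hmap_single [DecidableEq I] (h2 : (2 : I) ≠ 0) (h3 : (3 : I) ≠ 0) (h4 : (4 : I) ≠ 0)
    (j : I) : hmap (Pi.single j 1 : I → F) = Pi.single (j - 1) 1 := by
  have e : hmap (Pi.single j 1 : I → F) (j - 1) = 1 := by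
    unfold hmap
    rw [if_pos]
    · simp
    · intro k _ _ k3
      rw [sub_add_cancel] at k3
      simp [k3]
  funext i
  by_cases hi : i = j - 1
  · subst hi; simp [e]
  · rw [Pi.single_eq_of_ne hi]
    by_contra hc
    exact hi (hmap_unique h2 h3 h4 hc (by rw [e]; exact one_ne_zero))

lemma spanU [Fintype I] (h1 : (1 : I) ≠ 0) (h2 : (2 : I) ≠ 0) (h3 : (3 : I) ≠ 0)
    (h4 : (4 : I) ≠ 0) : affineSpan F (Uset F I) = ⊤ := by
  classical
  apply affineSpan_top_of_span
  · exact ⟨0, by ext i <;> simp [hmap]⟩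
  have mem : ∀ x : I → F, (x, hmap x) ∈ Submodule.span F (Uset F I) :=
    fun x => Submodule.subset_span ⟨x, rfl⟩
  have hA : ∀ j, ((Pi.single j 1 : I → F), (0 : I → F)) ∈ Submodule.span F (Uset F I) := by
    intro j
    have m1 := mem 1
    rw [hmap_big h1 h2 h3 h4 j (by simp)] at m1
    have m2 := mem (1 - Pi.single j 1)
    rw [hmap_big h1 h2 h3 h4 j (by intro k hk; simp [hk])] at m2
    simpa using Submodule.sub_mem _ m1 m2
  apply top_of_singles _ hA
  intro j
  have m := mem (Pi.single (j + 1) 1)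
  rw [hmap_single h2 h3 h4, add_sub_cancel_right] at m
  simpa using Submodule.sub_mem _ m (hA (j + 1))

lemma spanV [Fintype I] (h1 : (1 : I) ≠ 0) (h2 : (2 : I) ≠ 0) :
    affineSpan F (Vset F I) = ⊤ := by
  classical
  apply affineSpan_top_of_span
  · exact ⟨0, by ext i <;> simp [fmap]⟩
  have mem : ∀ x : I → F, (fmap x, x) ∈ Submodule.span F (Vset F I) :=
    fun x => Submodule.subset_span ⟨x, rfl⟩
  have hB : ∀ j, ((0 : I → F), (Pi.single j 1 : I → F)) ∈ Submodule.span F (Vset F I) := by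
    intro j
    have m := mem (Pi.single j 1)
    have e : fmap (Pi.single j 1 : I → F) = 0 := by
      funext k
      by_cases hk : k = j
      · subst hk
        have : k + 1 ≠ k := fun h => h1 (by linear_combination h)
        simp [fmap, this]
      · simp [fmap, hk]
    rwa [e] at m
  refine top_of_singles _ ?_ hB
  intro j
  have m := mem (Pi.single j 1 + Pi.single (j + 1) 1)
  have e : fmap (Pi.single j 1 + Pi.single (j + 1) 1 : I → F) = Pi.single j 1 := by
    have n1 : j + 1 ≠ j := fun h => h1 (by linear_combination h)
    have n2 : j + 1 + 1 ≠ j := fun h => h2 (by linear_combination h)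
    have n3 : j + 1 + 1 ≠ j + 1 := fun h => h1 (by linear_combination h)
    funext k
    by_cases hk : k = j
    · subst hk
      simp [fmap, Pi.single_apply, h1]
    · by_cases hk' : k = j + 1
      · subst hk'
        simp [fmap, Pi.single_apply, n2, h1]
      · simp [fmap, hk, hk']
  rw [e] at m
  have := Submodule.sub_mem _ m (Submodule.add_mem _ (hB j) (hB (j + 1)))
  simpa using this

lemma perU (hF : ∃ a : F, a ≠ 0 ∧ a ≠ 1)
    (h1 : (1 : I) ≠ 0) (h2 : (2 : I) ≠ 0) (h3 : (3 : I) ≠ 0) (h4 : (4 : I) ≠ 0) :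
    periods (Uset F I) = {0} := by
  classical
  ext ⟨w, w'⟩
  constructor
  · intro hw
    have hw : (fun v => v + (w, w')) '' (Uset F I) = Uset F I := hw
    have hadd : ∀ x, hmap (x + w) = hmap x + w' := by
      intro x
      have : (x, hmap x) + (w, w') ∈ Uset F I := by
        rw [← hw]
        exact ⟨_, ⟨x, rfl⟩, rfl⟩
      obtain ⟨z, hz⟩ := this
      simp only [Prod.mk_add_mk, Prod.mk.injEq] at hz
      rw [← hz.1, hz.2]
    obtain ⟨a, ha0, ha1⟩ := hF
    have hex : ∀ i, ∃ c : F, c ≠ 0 ∧ c + w i ≠ 0 := by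
      intro i
      by_cases h : 1 + w i = 0
      · refine ⟨a, ha0, fun h' => ha1 (by linear_combination h' - h)⟩
      · exact ⟨1, one_ne_zero, h⟩
    choose x hx1 hx2 using hex
    have hw' : w' = 0 := by
      have := hadd x
      rw [hmap_big h1 h2 h3 h4 0 (fun k _ => hx1 k),
        hmap_big (x := x + w) h1 h2 h3 h4 0 (fun k _ => hx2 k)] at this
      simpa using this.symm
    have hw0 : w = 0 := by
      funext j
      have := hadd (Pi.single j 1)
      rw [hw', add_zero, hmap_single h2 h3 h4] at this
      have e := congrFun this (j - 1)
      rw [Pi.single_eq_same] at e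
      obtain ⟨-, -, t⟩ := hmap_ne (by rw [e]; exact one_ne_zero)
      rw [e, sub_add_cancel] at t
      simpa using t
    simp [hw', hw0]
  · intro h
    rw [h]
    simp [periods]

lemma perV (h1 : (1 : I) ≠ 0) :
    periods (Vset F I) = {0} := by
  classical
  ext ⟨w', w⟩
  constructor
  · intro hw
    have hw : (fun v => v + (w', w)) '' (Vset F I) = Vset F I := hw
    have hadd : ∀ x, fmap (x + w) = fmap x + w' := by
      intro x
      have : (fmap x, x) + (w', w) ∈ Vset F I := by
        rw [← hw]
        exact ⟨_, ⟨x, rfl⟩, rfl⟩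
      obtain ⟨z, hz⟩ := this
      simp only [Prod.mk_add_mk, Prod.mk.injEq] at hz
      rw [← hz.2, hz.1]
    have f0 : fmap (0 : I → F) = 0 := by funext i; simp [fmap]
    have hw' : w' = fmap w := by
      have := hadd 0
      rw [zero_add, f0, zero_add] at this
      exact this.symm
    have hw0 : w = 0 := by
      funext j
      by_contra hc
      have hc : w j ≠ 0 := hc
      have n1 : j + 1 ≠ j := fun h => h1 (by linear_combination h)
      have := congrFun (hadd (Pi.single j (-w j) + Pi.single (j + 1) (1 - w (j + 1)))) j
      simp [hw', fmap, hc, n1, h1, n1.symm] at this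
    simp [hw', hw0, f0]
  · intro h
    rw [h]
    simp [periods]

end

end TilingAux

open TilingAux in
theorem statement5 {F : Type*} [Field F] (hF : ∃ a : F, a ≠ 0 ∧ a ≠ 1)
    (m : ℕ) (hm : 5 ≤ m) :
    ∃ U V : Set (Fin (2 * m) → F),
      IsTiling U V ∧
      IsProjective F U ∧ IsProjective F V ∧
      affineSpan F U = ⊤ ∧ affineSpan F V = ⊤ ∧
      periods U = {0} ∧ periods V = {0} ∧
      (∀ _ : Finite F, U.ncard = Nat.card F ^ m ∧ V.ncard = Nat.card F ^ m) := by
  haveI : NeZero m := ⟨by omega⟩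
  have hn : ∀ n : ℕ, 0 < n → n < 5 → (n : ZMod m) ≠ 0 := by
    intro n h0 h5 h
    rw [ZMod.natCast_eq_zero_iff] at h
    have := Nat.le_of_dvd h0 h
    omega
  have h1 : (1 : ZMod m) ≠ 0 := by simpa using hn 1 (by norm_num) (by norm_num)
  have h2 : (2 : ZMod m) ≠ 0 := by simpa using hn 2 (by norm_num) (by norm_num)
  have h3 : (3 : ZMod m) ≠ 0 := by simpa using hn 3 (by norm_num) (by norm_num)
  have h4 : (4 : ZMod m) ≠ 0 := by simpa using hn 4 (by norm_num) (by norm_num)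
  have hcard : Fintype.card (Fin (2 * m)) = Fintype.card (ZMod m ⊕ ZMod m) := by
    simp [ZMod.card, two_mul]
  let σ : Fin (2 * m) ≃ ZMod m ⊕ ZMod m := Fintype.equivOfCardEq hcard
  let e : ((ZMod m → F) × (ZMod m → F)) ≃ₗ[F] (Fin (2 * m) → F) :=
    (LinearEquiv.sumArrowLequivProdArrow (ZMod m) (ZMod m) F F).symm.trans
      (LinearEquiv.funCongrLeft F F σ)
  have tproj : ∀ A : Set ((ZMod m → F) × (ZMod m → F)), IsProjective F A →
      IsProjective F (e '' A) := by
    rintro A hA a _ ⟨u, hu, rfl⟩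
    exact ⟨a • u, hA a hu, by simp⟩
  have tspan : ∀ A : Set ((ZMod m → F) × (ZMod m → F)), affineSpan F A = ⊤ →
      affineSpan F (e '' A) = ⊤ := by
    intro A hA
    exact (AffineEquiv.span_eq_top_iff e.toAffineEquiv).mp hA
  have tper : ∀ A : Set ((ZMod m → F) × (ZMod m → F)), periods A = {0} →
      periods (e '' A) = {0} := by
    intro A hA
    ext w
    obtain ⟨w, rfl⟩ := e.surjective w
    have : e w ∈ periods (e '' A) ↔ w ∈ periods A := by
      show (fun v => v + e w) '' (e '' A) = e '' A ↔ (fun v => v + w) '' A = A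
      rw [← e.injective.image_injective.eq_iff, Set.image_image, Set.image_image]
      simp only [map_add]
    rw [this, hA]
    simp
  refine ⟨e '' Uset F (ZMod m), e '' Vset F (ZMod m), ?_, tproj _ projU, tproj _ projV,
    tspan _ (spanU h1 h2 h3 h4), tspan _ (spanV h1 h2), tper _ (perU hF h1 h2 h3 h4),
    tper _ (perV h1), ?_⟩
  · intro s
    obtain ⟨s, rfl⟩ := e.surjective s
    obtain ⟨⟨u, v⟩, ⟨hu, hv, hs⟩, huniq⟩ := tiling (F := F) h1 h2 h3 h4 s
    refine ⟨(e u, e v), ⟨⟨u, hu, rfl⟩, ⟨v, hv, rfl⟩, ?_⟩, ?_⟩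
    · simp only at hs ⊢
      rw [← hs, map_add]
    · rintro ⟨_, _⟩ ⟨⟨u', hu', rfl⟩, ⟨v', hv', rfl⟩, hs'⟩
      have := huniq (u', v') ⟨hu', hv', e.injective (by simpa using hs')⟩
      simp only [Prod.mk.injEq] at this
      rw [this.1, this.2]
  · intro _
    have hc : Nat.card (ZMod m → F) = Nat.card F ^ m := by
      rw [Nat.card_fun, Nat.card_zmod]
    constructor
    · rw [Set.ncard_image_of_injective _ e.injective, Uset, ← Set.image_univ,
        Set.ncard_image_of_injective, Set.ncard_univ, hc]
      intro a b h
      exact (Prod.mk.inj h).1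
    · rw [Set.ncard_image_of_injective _ e.injective, Vset, ← Set.image_univ,
        Set.ncard_image_of_injective, Set.ncard_univ, hc]
      intro a b h
      exact (Prod.mk.inj h).2
end

section
/- Let q ≥ 3 be a prime power, let m ≥ 3 be an integer, and let n = (q^m − 1)/(q − 1). Then there exists a 1-perfect code C in F_q^n that is full-rank (the affine span of C equals F_q^n) and whose kernel ker(C) has F_q-dimension n − 2m. -/
/-- The radius-1 Hamming ball centered at 0: vectors with at most one nonzero coordinate. -/
def hammingBall1 (F : Type*) [Zero F] (N : ℕ) : Set (Fin N → F) :=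
  {c | {j | c j ≠ 0}.Subsingleton}

/-- The kernel of `X` (as a set): vectors all of whose scalar multiples are periods of `X`.
This is the maximal `F`-subspace contained in `periods X`. -/
def kerSet (F : Type*) {S : Type*} [Field F] [AddCommGroup S] [Module F S]
    (X : Set S) : Set S :=
  {w | ∀ a : F, a • w ∈ periods X}

/-- The dimension of the kernel of `X` (the kernel set is a subspace, so spanning it
does not change it). -/
noncomputable def kerDim (F : Type*) {S : Type*} [Field F] [AddCommGroup S] [Module F S]
    (X : Set S) : ℕ :=
  Module.finrank F (Submodule.span F (kerSet F X))

open Classical in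
/-- f -/
noncomputable def pf {F : Type*} [Field F] {m : ℕ} (hm : 3 ≤ m) (x : Fin m → F) : Fin m → F := fun i =>
  if i.val = 0 then (if x ⟨1, by omega⟩ = 0 then x ⟨2, by omega⟩ else 0)
  else if i.val = 1 then (if x ⟨2, by omega⟩ = 0 then x ⟨0, by omega⟩ else 0)
  else (if x ⟨0, by omega⟩ = 0 then x ⟨i.val - 1, by omega⟩ else 0)

open Classical in
noncomputable def pg {F : Type*} [Field F] {m : ℕ} (y : Fin m → F) : Fin m → F := fun i =>
  if y i = 0 then 1 else 0

theorem pf_smul {F : Type*} [Field F] {m : ℕ} (hm : 3 ≤ m) (a : F) (x : Fin m → F) :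
    pf hm (a • x) = a • pf hm x := by
  ext i
  by_cases ha : a = 0
  · simp [pf, ha]
  · simp only [pf, Pi.smul_apply, smul_eq_mul]
    grind

open Classical in
theorem core {F : Type*} [Field F] (A B C A' B' C' : F)
    (h0 : (if B = 0 then C else 0) = (if B' = 0 then C' else 0) → A = A')
    (h1 : (if C = 0 then A else 0) = (if C' = 0 then A' else 0) → B = B')
    (h2 : (if A = 0 then B else 0) = (if A' = 0 then B' else 0) → C = C') :
    A = A' ∧ B = B' ∧ C = C' := by
  grind

theorem inj {F : Type*} [Field F] {m : ℕ} (hm : 3 ≤ m) (t : Fin m → F) :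
    Function.Injective (fun x : Fin m → F => x + pg (t - pf hm x)) := by
  intro x x' h
  have key : ∀ i, pf hm x i = pf hm x' i → x i = x' i := by
    intro i hi
    have h1 := congrFun h i
    have h2 : pg (t - pf hm x) i = pg (t - pf hm x') i := by
      have h3 : (t - pf hm x) i = (t - pf hm x') i := by simp only [Pi.sub_apply, hi]
      unfold pg
      rw [h3]
    simp only [Pi.add_apply, h2] at h1
    exact add_right_cancel h1
  have k0 := key ⟨0, by omega⟩
  have k1 := key ⟨1, by omega⟩
  have k2 := key ⟨2, by omega⟩
  simp [pf] at k0 k1 k2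
  obtain ⟨a, b, c⟩ := core _ _ _ _ _ _ k0 k1 k2
  have : ∀ k (hk : k < m), x ⟨k, hk⟩ = x' ⟨k, hk⟩ := by
    intro k
    induction k using Nat.strong_induction_on with
    | _ k ih =>
      intro hk
      by_cases h0 : k = 0
      · subst h0; exact a
      by_cases h1 : k = 1
      · subst h1; exact b
      by_cases h2 : k = 2
      · subst h2; exact c
      apply key
      simp only [pf, h0, h1, if_false]
      rw [a, ih (k-1) (by omega)]
  ext i; exact this i.1 i.2

theorem exists_third {F : Type*} [Field F] [Fintype F] (hq : 3 ≤ Fintype.card F) :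
    ∃ l : F, l ≠ 0 ∧ l ≠ 1 := by
  classical
  have : ({0, 1} : Finset F).card < (Finset.univ : Finset F).card := by
    rw [Finset.card_univ]; exact lt_of_le_of_lt Finset.card_le_two (by omega)
  obtain ⟨l, _, hl⟩ := Finset.exists_mem_notMem_of_card_lt_card this
  simp at hl
  exact ⟨l, hl⟩

/-- functional vanish on all `(x, f x)` -/
theorem span_U {F : Type*} [Field F] [Fintype F] (hq : 3 ≤ Fintype.card F) {m : ℕ} (hm : 3 ≤ m)
    (V : Submodule F ((Fin m → F) × (Fin m → F))) (hV : ∀ x, (x, pf hm x) ∈ V) : V = ⊤ := by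
  classical
  by_contra hne
  obtain ⟨φ, hφ, hle⟩ := Submodule.exists_le_ker_of_lt_top V (lt_top_iff_ne_top.2 hne)
  have h : ∀ x, φ (x, pf hm x) = 0 := fun x => hle (hV x)
  obtain ⟨l, hl0, hl1⟩ := exists_third hq
  set i0 : Fin m := ⟨0, by omega⟩ with hi0
  set i1 : Fin m := ⟨1, by omega⟩ with hi1
  set i2 : Fin m := ⟨2, by omega⟩ with hi2
  set a : Fin m → F := fun i => φ (Pi.single i 1, 0)
  set b : Fin m → F := fun i => φ (0, Pi.single i 1)
  have hform : ∀ x y, φ (x, y) = ∑ i, x i * a i + ∑ i, y i * b i := by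
    intro x y
    have e1 : φ (x, y) = (φ ∘ₗ LinearMap.inl F _ _) x + (φ ∘ₗ LinearMap.inr F _ _) y := by
      simp [← map_add]
    rw [e1, LinearMap.pi_apply_eq_sum_univ (φ ∘ₗ LinearMap.inl F _ _),
      LinearMap.pi_apply_eq_sum_univ (φ ∘ₗ LinearMap.inr F _ _)]
    have : ∀ i : Fin m, (fun j => if i = j then (1:F) else 0) = Pi.single i 1 := by
      intro i; ext j; simp [Pi.single_apply, eq_comm]
    simp [a, b, this]
  have E : ∀ x y, pf hm x = y → ∑ i, x i * a i + ∑ i, y i * b i = 0 := by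
    intro x y hxy; rw [← hform, ← hxy, h]
  have n01 : i0 ≠ i1 := by simp [i0, i1]
  have n02 : i0 ≠ i2 := by simp [i0, i2]
  have n12 : i1 ≠ i2 := by simp [i1, i2]
  -- e0
  have q1 : a i0 + b i1 = 0 := by
    have := E (Pi.single i0 1) (Pi.single i1 1) (by
      ext i; simp only [pf, Pi.single_apply, Fin.ext_iff, hi0, hi1, hi2]; grind)
    simpa [Pi.single_apply] using this
  -- e0 + k e2
  have q2 : ∀ k : F, k ≠ 0 → a i0 + k * a i2 + k * b i0 = 0 := by
    intro k hk
    have := E (Pi.single i0 1 + Pi.single i2 k) (Pi.single i0 k) (by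
      ext i; simp only [pf, Pi.add_apply, Pi.single_apply, Fin.ext_iff, hi0, hi1, hi2]; grind)
    simpa [Pi.single_apply, add_mul, Finset.sum_add_distrib] using this
  -- e0 + ej, j not 0 or 2
  have q3 : ∀ j : Fin m, j ≠ i0 → j ≠ i2 → a i0 + a j + b i1 = 0 := by
    intro j h0 h2
    have := E (Pi.single i0 1 + Pi.single j 1) (Pi.single i1 1) (by
      ext i; simp only [pf, Pi.add_apply, Pi.single_apply, Fin.ext_iff, hi0, hi1, hi2, ne_eq] at *; grind)
    simpa [Pi.single_apply, add_mul, Finset.sum_add_distrib] using this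
  have aj : ∀ j : Fin m, j ≠ i0 → j ≠ i2 → a j = 0 := by
    intro j h0 h2
    linear_combination q3 j h0 h2 - q1
  -- e2 and e1 + e2
  have q0 : a i0 = 0 ∧ a i2 + b i0 = 0 := by
    have e1 := q2 1 one_ne_zero
    have e2 := q2 l hl0
    have : (l - 1) * (a i2 + b i0) = 0 := by linear_combination e2 - e1
    have := (mul_eq_zero.1 this).resolve_left (sub_ne_zero.2 hl1)
    exact ⟨by linear_combination e1 - this, this⟩
  -- e_j, j not 0, 2
  have q4 : ∀ j k : Fin m, j ≠ i0 → j ≠ i2 → k.val = j.val + 1 → a j + b k = 0 := by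
    intro j k h0 h2 hk
    have := E (Pi.single j 1) (Pi.single k 1) (by
      ext i; simp only [pf, Pi.add_apply, Pi.single_apply, Fin.ext_iff, hi0, hi1, hi2, ne_eq] at *; grind)
    simpa [Pi.single_apply] using this
  -- e0 + e1 + e2
  have q5 : a i0 + a i1 + a i2 = 0 := by
    have := E (Pi.single i0 1 + Pi.single i1 1 + Pi.single i2 1) 0 (by
      ext i; simp only [pf, Pi.add_apply, Pi.single_apply, Fin.ext_iff, hi0, hi1, hi2, Pi.zero_apply]; grind)
    simpa [Pi.single_apply, add_mul, Finset.sum_add_distrib] using this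
  have a1 := aj i1 n01.symm n12
  have a2 : a i2 = 0 := by linear_combination q5 - q0.1 - a1
  have aall : ∀ j, a j = 0 := by
    intro j
    by_cases h0 : j = i0
    · rw [h0, q0.1]
    by_cases h2 : j = i2
    · rw [h2, a2]
    exact aj j h0 h2
  -- e2
  have q6 : ∀ k : Fin m, k.val = 3 → a i2 + b i0 + b k = 0 := by
    intro k hk
    have := E (Pi.single i2 1) (Pi.single i0 1 + Pi.single k 1) (by
      ext i; simp only [pf, Pi.add_apply, Pi.single_apply, Fin.ext_iff, hi0, hi1, hi2, ne_eq] at *; grind)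
    simpa [Pi.single_apply, add_mul, Finset.sum_add_distrib, add_assoc] using this
  have ball : ∀ j, b j = 0 := by
    intro j
    by_cases h0 : j.val = 0
    · rw [show j = i0 from Fin.ext h0]; linear_combination q0.2 - a2
    by_cases h1 : j.val = 1
    · rw [show j = i1 from Fin.ext h1]; linear_combination q1 - q0.1
    by_cases h3 : j.val = 3
    · linear_combination q6 j h3 - q0.2
    have := q4 ⟨j.val - 1, by omega⟩ j (by simp [i0, Fin.ext_iff]; omega)
      (by simp [i2, Fin.ext_iff]; omega) (by simp; omega)
    simpa [aall] using this
  apply hφ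
  apply LinearMap.ext
  rintro ⟨x, y⟩
  simp [hform, aall, ball]

/-- the set `D`, a graph -/
def pD (F : Type*) [Field F] (m : ℕ) : Set ((Fin m → F) × (Fin m → F)) := {p | p.1 = pg p.2}

theorem span_D {F : Type*} [Field F] [Fintype F] (hq : 3 ≤ Fintype.card F) {m : ℕ}
    (V : Submodule F ((Fin m → F) × (Fin m → F)))
    (hV : ∀ p ∈ pD F m, ∀ p' ∈ pD F m, p - p' ∈ V) : V = ⊤ := by
  classical
  obtain ⟨l, hl0, hl1⟩ := exists_third hq
  have key : ∀ (i : Fin m) (c : F), c ≠ 0 →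
      (((Pi.single i 1, 0) : (Fin m → F) × (Fin m → F)) - (0, Pi.single i c)) ∈ V := by
    intro i c hc
    have := hV (pg 0, 0) rfl (pg (Pi.single i c), Pi.single i c) rfl
    convert this using 1
    ext j
    · by_cases h : j = i
      · subst h; simp [pg, hc]
      · simp [pg, h]
    · simp
  have hb : ∀ i : Fin m, ((0, Pi.single i 1) : (Fin m → F) × (Fin m → F)) ∈ V := by
    intro i
    have h := V.smul_mem (l - 1)⁻¹ (V.sub_mem (key i 1 one_ne_zero) (key i l hl0))
    convert h using 1
    have hl : l - 1 ≠ 0 := sub_ne_zero.2 hl1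
    ext j
    · simp
    · by_cases h : j = i
      · subst h; simp; field_simp; ring
      · simp [h]
  have ha : ∀ i : Fin m, ((Pi.single i 1, 0) : (Fin m → F) × (Fin m → F)) ∈ V := by
    intro i
    have h := V.add_mem (key i 1 one_ne_zero) (hb i)
    simpa using h
  rw [eq_top_iff]
  rintro ⟨x, y⟩ -
  have : ((x, y) : (Fin m → F) × (Fin m → F)) =
      ∑ i, x i • ((Pi.single i 1, 0) : (Fin m → F) × (Fin m → F)) +
      ∑ i, y i • ((0, Pi.single i 1) : (Fin m → F) × (Fin m → F)) := by
    ext j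
    · simp [Prod.fst_sum, Finset.sum_apply, Pi.single_apply]
    · simp [Prod.snd_sum, Finset.sum_apply, Pi.single_apply]
  rw [this]
  exact V.add_mem (V.sum_mem fun i _ => V.smul_mem _ (ha i))
    (V.sum_mem fun i _ => V.smul_mem _ (hb i))

theorem ker_D {F : Type*} [Field F] [Fintype F] (hq : 3 ≤ Fintype.card F) {m : ℕ}
    (w : (Fin m → F) × (Fin m → F))
    (h : ∀ (c : F), ∀ p ∈ pD F m, p + c • w ∈ pD F m) : w = 0 := by
  classical
  obtain ⟨l, hl0, hl1⟩ := exists_third hq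
  obtain ⟨a, b⟩ := w
  have hb : b = 0 := by
    ext i
    by_contra hbi
    simp only [Pi.zero_apply] at hbi
    have key : ∀ c : F, c ≠ 0 → 1 + c * a i = 0 := by
      intro c hc
      have := congrFun (h c (pg 0, 0) rfl) i
      simpa [pg, hc, hbi] using this
    have e1 := key 1 one_ne_zero
    have e2 := key l hl0
    have : (l - 1) * a i = 0 := by linear_combination e2 - e1
    have := (mul_eq_zero.1 this).resolve_left (sub_ne_zero.2 hl1)
    simp [this] at e1
  subst hb
  have := h 1 (pg 0, 0) rfl
  simp [pD] at this
  simp [this]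

/-- parity check map -/
noncomputable def pH {F : Type*} [Field F] {m n : ℕ} (hm : 3 ≤ m) (X : Fin n → Fin m → F) :
    (Fin n → F) →ₗ[F] (Fin m → F) × (Fin m → F) :=
  Fintype.linearCombination F (fun p => (X p, pf hm (X p)))

theorem pH_single {F : Type*} [Field F] {m n : ℕ} (hm : 3 ≤ m) (X : Fin n → Fin m → F)
    (p : Fin n) (a : F) : pH hm X (Pi.single p a) = (a • X p, pf hm (a • X p)) := by
  classical
  rw [pH, Fintype.linearCombination_apply_single, pf_smul]
  rfl

theorem ball_single {F : Type*} [Field F] {n : ℕ} (h0 : 0 < n) (u : Fin n → F) :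
    u ∈ hammingBall1 F n ↔ ∃ p a, u = Pi.single p a := by
  classical
  constructor
  · intro h
    by_cases hu : u = 0
    · exact ⟨⟨0, h0⟩, 0, by simp [hu]⟩
    · obtain ⟨p, hp⟩ := Function.ne_iff.1 hu
      refine ⟨p, u p, ?_⟩
      ext j
      by_cases hj : j = p
      · subst hj; simp
      · simp only [Pi.single_apply, hj, if_false]
        by_contra hne
        exact hj (h hne hp)
  · rintro ⟨p, a, rfl⟩ i hi j hj
    simp only [Set.mem_ofPred_eq, Pi.single_apply, ne_eq] at hi hj
    grind

theorem exists_points (F : Type*) [Field F] [Fintype F] (m n : ℕ) (hm : 3 ≤ m)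
    (hn : n = (Fintype.card F ^ m - 1) / (Fintype.card F - 1)) :
    0 < n ∧ ∃ X : Fin n → Fin m → F, (∀ p, X p ≠ 0) ∧
      (∀ x : Fin m → F, x ≠ 0 → ∃ (p : Fin n) (a : F), a • X p = x) ∧
      (∀ (p p' : Fin n) (a : F), X p = a • X p' → p = p') := by
  classical
  have hc : Nat.card (Projectivization F (Fin m → F)) = n := by
    rw [Projectivization.card'', hn]; simp
  haveI : Nonempty (Fin m) := ⟨⟨0, by omega⟩⟩
  haveI : Finite (Projectivization F (Fin m → F)) := inferInstance
  have e : Projectivization F (Fin m → F) ≃ Fin n := Finite.equivFinOfCardEq hc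
  refine ⟨?_, fun p => (e.symm p).rep, fun p => (e.symm p).rep_nonzero, ?_, ?_⟩
  · rw [← hc]; exact Nat.card_pos
  · intro x hx
    obtain ⟨a, ha⟩ := Projectivization.exists_smul_eq_mk_rep F x hx
    refine ⟨e (Projectivization.mk F x hx), ((a⁻¹ : Fˣ) : F), ?_⟩
    simp only [Equiv.symm_apply_apply, ← ha]
    exact inv_smul_smul a x
  · intro p p' a h
    apply e.symm.injective
    rw [← (e.symm p).mk_rep, ← (e.symm p').mk_rep, Projectivization.mk_eq_mk_iff']
    exact ⟨a, h.symm⟩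

/-- Every finite field has prime-power cardinality `q ≥ 2`, and for every prime power `q`
there is a field of that order; so "let `q ≥ 3` be a prime power" is rendered as
quantification over finite fields `F` with `3 ≤ |F|`. -/
theorem statement6 (F : Type*) [Field F] [Fintype F] (hq : 3 ≤ Fintype.card F)
    (m : ℕ) (hm : 3 ≤ m)
    (n : ℕ) (hn : n = (Fintype.card F ^ m - 1) / (Fintype.card F - 1)) :
    ∃ C : Set (Fin n → F),
      IsTiling (hammingBall1 F n) C ∧
      affineSpan F C = ⊤ ∧
      kerDim F C = n - 2 * m := by
  classical
  obtain ⟨hn0, X, hX0, hXs, hXi⟩ := exists_points F m n hm hn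
  set H := pH hm X with hH
  have hsingle := pH_single hm X
  have hball : ∀ u ∈ hammingBall1 F n, (H u).2 = pf hm (H u).1 := by
    intro u hu
    obtain ⟨p, a, rfl⟩ := (ball_single hn0 u).1 hu
    rw [hH, hsingle]
  have hsurjU : ∀ x : Fin m → F, ∃ u ∈ hammingBall1 F n, H u = (x, pf hm x) := by
    intro x
    by_cases hx : x = 0
    · refine ⟨Pi.single ⟨0, hn0⟩ 0, (ball_single hn0 _).2 ⟨_, _, rfl⟩, ?_⟩
      rw [hH, hsingle, zero_smul, hx]
    · obtain ⟨p, a, rfl⟩ := hXs x hx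
      exact ⟨Pi.single p a, (ball_single hn0 _).2 ⟨_, _, rfl⟩, hsingle p a⟩
  have hinjU : ∀ u ∈ hammingBall1 F n, ∀ u' ∈ hammingBall1 F n, (H u).1 = (H u').1 → u = u' := by
    intro u hu u' hu' h
    obtain ⟨p, a, rfl⟩ := (ball_single hn0 u).1 hu
    obtain ⟨p', a', rfl⟩ := (ball_single hn0 u').1 hu'
    rw [hH, hsingle, hsingle] at h
    simp only at h
    by_cases ha : a = 0
    · subst ha
      rw [zero_smul] at h
      have : a' = 0 := (smul_eq_zero.1 h.symm).resolve_right (hX0 p')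
      simp [this]
    · have hp : p = p' := by
        apply hXi p p' (a⁻¹ * a')
        rw [mul_smul, ← h, inv_smul_smul₀ ha]
      subst hp
      have : (a - a') • X p = 0 := by rw [sub_smul, h, sub_self]
      have := (smul_eq_zero.1 this).resolve_right (hX0 p)
      rw [sub_eq_zero.1 this]
  have hrange : LinearMap.range H = ⊤ := by
    apply span_U hq hm
    intro x
    obtain ⟨u, _, hu⟩ := hsurjU x
    exact ⟨u, hu⟩
  have hsurj : Function.Surjective H := LinearMap.range_eq_top.1 hrange
  refine ⟨H ⁻¹' pD F m, ?_, ?_, ?_⟩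
  · intro s
    have hbij := (Finite.injective_iff_bijective.1 (inj hm (H s).2))
    obtain ⟨x, hx⟩ := hbij.2 (H s).1
    obtain ⟨u, huB, hu⟩ := hsurjU x
    refine ⟨(u, s - u), ⟨huB, ?_, by simp⟩, ?_⟩
    · simp only [Set.mem_preimage, pD, Set.mem_ofPred_eq, map_sub, hu, Prod.fst_sub, Prod.snd_sub]
      rw [← hx]; simp
    · rintro ⟨u', c⟩ ⟨hu', hc, hs⟩
      simp only at hu' hc hs
      have hc' : c = s - u' := by rw [← hs]; simp
      subst hc'
      have hE : u' = u := by
        apply hinjU u' hu' u huB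
        apply hbij.1
        simp only [Set.mem_preimage, pD, Set.mem_ofPred_eq, map_sub, Prod.fst_sub, Prod.snd_sub,
          hball u' hu'] at hc
        simp only [hu] at hx ⊢
        rw [← hc, hx]; simp
      rw [hE]
  · obtain ⟨c0, hc0⟩ := hsurj (pg 0, 0)
    have hc0' : c0 ∈ H ⁻¹' pD F m := by
      simp only [Set.mem_preimage, hc0]; rfl
    rw [AffineSubspace.affineSpan_eq_top_iff_vectorSpan_eq_top_of_nonempty F _ _ ⟨c0, hc0'⟩]
    have hdiff : ∀ c ∈ H ⁻¹' pD F m, ∀ c' ∈ H ⁻¹' pD F m, c - c' ∈ vectorSpan F (H ⁻¹' pD F m) :=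
      fun c hc c' hc' => vsub_mem_vectorSpan F hc hc'
    have hker : LinearMap.ker H ≤ vectorSpan F (H ⁻¹' pD F m) := by
      intro k hk
      have := hdiff (c0 + k) (by
        simp only [Set.mem_preimage, map_add, LinearMap.mem_ker.1 hk, add_zero]; exact hc0') c0 hc0'
      simpa using this
    have hmap : (vectorSpan F (H ⁻¹' pD F m)).map H = ⊤ := by
      apply span_D hq
      intro p hp p' hp'
      obtain ⟨c, rfl⟩ := hsurj p
      obtain ⟨c', rfl⟩ := hsurj p'
      exact ⟨c - c', hdiff c hp c' hp', map_sub _ _ _⟩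
    rw [← Submodule.comap_map_eq_self hker, hmap, Submodule.comap_top]
  · have hk : kerSet F (H ⁻¹' pD F m) = (LinearMap.ker H : Set (Fin n → F)) := by
      ext w
      constructor
      · intro hw
        apply ker_D hq
        intro c p hp
        obtain ⟨v, rfl⟩ := hsurj p
        have h1 := hw c
        have h2 : v + c • w ∈ H ⁻¹' pD F m := by
          rw [← (show _ '' _ = _ from h1)]
          exact ⟨v, hp, rfl⟩
        simpa using h2
      · intro hw c
        have hw' : H w = 0 := hw
        show _ '' _ = _
        ext v
        constructor
        · rintro ⟨v', hv', rfl⟩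
          simpa [hw'] using hv'
        · intro hv
          exact ⟨v - c • w, by simpa [hw'] using hv, by simp⟩
    rw [kerDim, hk, Submodule.span_eq]
    have := LinearMap.finrank_range_add_finrank_ker H
    rw [hrange, finrank_top] at this
    simp at this
    omega
end
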